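/- arXiv:1412.7363 — 3 statements merged into one kernel-verified Lean document; each statement's English description precedes it below -/
import Mathlib

section
/- Let b, c be positive integers, let p ≥ 1 be an integer, and let χ₁, χ₂ be non-principal primitive Dirichlet characters of the same modulus k. If (−1)^{p+1}·χ₁(−1)·χ₂(−1) = 1, then Σ_{n=1}^{ck−1} χ₁(n)·B̄_{p,χ₂}(bn/c) = 0. -/
open Finset

/-- The `n`-th Bernoulli polynomial evaluated at a real number. -/
noncomputable def BPoly (n : ℕ) (x : ℝ) : ℝ :=
  Polynomial.eval x ((Polynomial.bernoulli n).map (algebraMap ℚ ℝ))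

open scoped Classical in
/-- The `n`-th Bernoulli function `B̄ₙ`. -/
noncomputable def BFun (n : ℕ) (x : ℝ) : ℝ :=
  if n = 1 then (if ∃ m : ℤ, x = (m : ℝ) then 0 else x - ⌊x⌋ - 1/2)
  else BPoly n (Int.fract x)

/-- The generalized Bernoulli function `B̄_{m,χ}` attached to a Dirichlet character. -/
noncomputable def BFunChar {k : ℕ} (χ : DirichletCharacter ℂ k) (m : ℕ) (x : ℝ) : ℂ :=
  (k : ℂ) ^ ((m : ℤ) - 1) *
    ∑ n ∈ Finset.Icc 1 (k - 1), (starRingEnd ℂ) (χ (n : ZMod k)) * ((BFun m (((n : ℝ) + x) / k)) : ℂ)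

/-- The generalized Bernoulli number `B_{m,χ} = B̄_{m,χ}(0)`. -/
noncomputable def BNumChar {k : ℕ} (χ : DirichletCharacter ℂ k) (m : ℕ) : ℂ := BFunChar χ m 0

/-- The complex conjugate of a Dirichlet character. -/
noncomputable def conjChar {k : ℕ} (χ : DirichletCharacter ℂ k) : DirichletCharacter ℂ k :=
  χ.ringHomComp (starRingEnd ℂ)

/-- The character Dedekind sum `s_p(b,c : χ₁, χ₂)` for characters of the same modulus. -/
noncomputable def sChar {k : ℕ} (p b c : ℕ) (χ₁ χ₂ : DirichletCharacter ℂ k) : ℂ :=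
  ∑ n ∈ Finset.range (c * k),
    χ₁ (n : ZMod k) * BFunChar χ₂ p (((b : ℝ) * n) / c) * ((BFun 1 ((n : ℝ) / (c * k))) : ℂ)

/-!
For a multiple `N` of the modulus of `χ₁`, replacing `n` by `N - n` multiplies `χ₁(n)` by `χ₁(-1)`.
If moreover `r N` is a multiple of the modulus of `χ₂`, periodicity and parity of `B̄_{p,χ₂}` show
that `B̄_{p,χ₂}(r n)` gets multiplied by `(-1)^p χ₂(-1)`. The parity condition says that the
product of the two signs is `-1`, so the sum equals its own negative. For `r = b/c` one takes
`N = ck`.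
-/

lemma BPoly_eq_bernoulliFun (n : ℕ) (x : ℝ) : BPoly n x = bernoulliFun n x := rfl

lemma BFun_eq_ite (m : ℕ) (x : ℝ) :
    BFun m x = if m = 1 ∧ Int.fract x = 0 then 0 else bernoulliFun m (Int.fract x) := by
  have mem_int_iff : (∃ j : ℤ, x = j) ↔ Int.fract x = 0 := by
    simp only [Int.fract_eq_zero_iff, Set.mem_range, eq_comm]
  rcases eq_or_ne m 1 with rfl | hm
  · simp only [BFun, mem_int_iff, if_true, true_and, bernoulliFun_one, Int.fract]
  · simp only [BFun, hm, false_and, if_false, BPoly_eq_bernoulliFun]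

lemma BFun_periodic (m : ℕ) : Function.Periodic (BFun m) 1 := fun x ↦ by
  simp only [BFun_eq_ite, Int.fract_add_one]

lemma bernoulliFun_eval_zero_eq_neg_one_pow_mul {m : ℕ} (hm : m ≠ 1) :
    bernoulliFun m 0 = (-1) ^ m * bernoulliFun m 0 := by
  rw [← bernoulliFun_eval_one_sub, sub_zero, bernoulliFun_endpoints_eq_of_ne_one hm]

lemma BFun_neg (m : ℕ) (x : ℝ) : BFun m (-x) = (-1) ^ m * BFun m x := by
  simp only [BFun_eq_ite, Int.fract_neg_eq_zero]
  split_ifs with h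
  · rw [mul_zero]
  · by_cases hx : Int.fract x = 0
    · rw [Int.fract_neg_eq_zero.mpr hx, hx]
      exact bernoulliFun_eval_zero_eq_neg_one_pow_mul fun hm ↦ h ⟨hm, hx⟩
    · rw [Int.fract_neg hx, bernoulliFun_eval_one_sub]

lemma sum_Icc_one_sub_one_reflect {M : Type*} [AddCommMonoid M] (f : ℕ → M) (N : ℕ) :
    ∑ n ∈ Icc 1 (N - 1), f (N - n) = ∑ n ∈ Icc 1 (N - 1), f n := by
  refine sum_nbij' (N - ·) (N - ·) ?_ ?_ ?_ ?_ fun _ _ ↦ rfl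
  all_goals
    simp only [mem_Icc]
    omega

lemma dirichletCharacter_natCast_sub {R : Type*} [CommMonoidWithZero R] {k N n : ℕ}
    (χ : DirichletCharacter R k) (hN : k ∣ N) (hn : n ≤ N) :
    χ ((N - n : ℕ) : ZMod k) = χ (-1) * χ n := by
  rw [Nat.cast_sub hn, (ZMod.natCast_eq_zero_iff N k).mpr hN, zero_sub, ← neg_one_mul, map_mul]

lemma conj_dirichletCharacter_neg_one {k : ℕ} (χ : DirichletCharacter ℂ k) :
    starRingEnd ℂ (χ (-1)) = χ (-1) := by
  rcases χ.even_or_odd with h_even | h_odd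
  · rw [h_even, map_one]
  · rw [h_odd, map_neg, map_one]

lemma BFunChar_periodic {k : ℕ} [NeZero k] (χ : DirichletCharacter ℂ k) (m : ℕ) :
    Function.Periodic (BFunChar χ m) k := fun x ↦ by
  have hk : (k : ℝ) ≠ 0 := NeZero.ne _
  simp only [BFunChar, ← add_assoc, add_div _ (k : ℝ), div_self hk, BFun_periodic m _]

lemma BFunChar_neg {k : ℕ} [NeZero k] (χ : DirichletCharacter ℂ k) (m : ℕ) (x : ℝ) :
    BFunChar χ m (-x) = (-1) ^ m * χ (-1) * BFunChar χ m x := by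
  have hk : (k : ℝ) ≠ 0 := NeZero.ne _
  rw [BFunChar, BFunChar, mul_left_comm]
  congr 1
  rw [← sum_Icc_one_sub_one_reflect _ k, mul_sum]
  refine sum_congr rfl fun n hn ↦ ?_
  have hnk : n ≤ k := (mem_Icc.mp hn).2.trans (Nat.sub_le k 1)
  have arg_reflect : (((k - n : ℕ) : ℝ) + -x) / k = 1 - (n + x) / k := by
    rw [Nat.cast_sub hnk]
    field_simp
    ring
  rw [arg_reflect, (BFun_periodic m).sub_eq', BFun_neg,
    dirichletCharacter_natCast_sub χ dvd_rfl hnk, map_mul, conj_dirichletCharacter_neg_one]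
  push_cast
  ring

theorem sum_char_BFunChar_eq_zero_general {k₁ k₂ : ℕ} [NeZero k₂] (χ₁ : DirichletCharacter ℂ k₁)
    (χ₂ : DirichletCharacter ℂ k₂) {p N : ℕ} {r : ℝ} {j : ℤ} (hN : k₁ ∣ N) (hr : r * N = j * k₂)
    (hpar : (-1 : ℂ) ^ (p + 1) * χ₁ (-1) * χ₂ (-1) = 1) :
    ∑ n ∈ Icc 1 (N - 1), χ₁ (n : ZMod k₁) * BFunChar χ₂ p (r * n) = 0 := by
  refine self_eq_neg.mp ?_
  rw [← sum_neg_distrib, ← sum_Icc_one_sub_one_reflect]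
  refine sum_congr rfl fun n hn ↦ ?_
  have hnN : n ≤ N := (mem_Icc.mp hn).2.trans (Nat.sub_le N 1)
  have BFunChar_reflect : BFunChar χ₂ p (r * (N - n : ℕ)) =
      (-1) ^ p * χ₂ (-1) * BFunChar χ₂ p (r * n) := by
    rw [Nat.cast_sub hnN, mul_sub, hr, (BFunChar_periodic χ₂ p).int_mul_sub_eq, BFunChar_neg]
  rw [dirichletCharacter_natCast_sub χ₁ hN hnN, BFunChar_reflect]
  linear_combination -(χ₁ n * BFunChar χ₂ p (r * n)) * hpar

/-- The sum `Σ_{n=1}^{ck−1} χ₁(n) B̄_{p,χ₂}(bn/c)` vanishes when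
`(−1)^{p+1} χ₁(−1) χ₂(−1) = 1`. -/
theorem sum_char_BFunChar_eq_zero (b c : ℕ) (hb : 0 < b) (hc : 0 < c) (p : ℕ) (hp : 1 ≤ p)
    (k : ℕ) [NeZero k] (χ₁ χ₂ : DirichletCharacter ℂ k)
    (h₁ : χ₁ ≠ 1) (h₂ : χ₂ ≠ 1) (hprim₁ : χ₁.IsPrimitive) (hprim₂ : χ₂.IsPrimitive)
    (hpar : (-1 : ℂ) ^ (p + 1) * χ₁ (-1) * χ₂ (-1) = 1) :
    ∑ n ∈ Finset.Icc 1 (c * k - 1), χ₁ (n : ZMod k) * BFunChar χ₂ p (((b : ℝ) * n) / c) = 0 := by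
  have hc₀ : (c : ℝ) ≠ 0 := mod_cast hc.ne'
  have slope_mul_length : (b / c : ℝ) * (c * k : ℕ) = (b : ℤ) * k := by
    push_cast
    field_simp
  simpa only [div_mul_eq_mul_div] using
    sum_char_BFunChar_eq_zero_general χ₁ χ₂ (dvd_mul_left k c) slope_mul_length hpar
end

section
/- Let r ≥ 1, let n₁, …, n_r ≥ 0 be integers, b₁, …, b_r nonzero real numbers, y₁, …, y_r and x real numbers, and define T_{n₁,…,n_r}(x; b₁,…,b_r; y₁,…,y_r) = Σ_{a=0}^{n₁+⋯+n_{r−1}} (−1)^a · Σ_{j₁+⋯+j_{r−1}=a, 0≤j_l≤n_l} ( a!/(j₁!⋯j_{r−1}!) ) · b₁^{j₁}⋯b_{r−1}^{j_{r−1}} · b_r^{−a−1} · Ĉ_{n₁−j₁,…,n_{r−1}−j_{r−1}, n_r+a+1}, where Ĉ_{m₁,…,m_r} = (1/(m₁!⋯m_r!))·( ∏_{l=1}^r B_{m_l}(b_l x + y_l) − ∏_{l=1}^r B_{m_l}(y_l) ). Then for every permutation σ of {1,…,r}, T_{n₁,…,n_r}(x; b₁,…,b_r; y₁,…,y_r)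 = T_{n_{σ(1)},…,n_{σ(r)}}(x; b_{σ(1)},…,b_{σ(r)}; y_{σ(1)},…,y_{σ(r)}). -/
open Finset

/-- The quantity `Ĉ_{m₁,…,m_{r}}(x;b;y)` for `r = m + 1` factors. -/
noncomputable def Chat (m : ℕ) (b y : Fin (m + 1) → ℝ) (x : ℝ) (mv : Fin (m + 1) → ℕ) : ℝ :=
  (1 / ∏ l, ((mv l).factorial : ℝ)) *
    (∏ l, BPoly (mv l) (b l * x + y l) - ∏ l, BPoly (mv l) (y l))

/-- The right-hand side `T_{n₁,…,n_r}(x;b;y)` of the product-integral formula,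
for `r = m + 1` factors. -/
noncomputable def Tsum (m : ℕ) (n : Fin (m + 1) → ℕ) (b y : Fin (m + 1) → ℝ) (x : ℝ) : ℝ :=
  ∑ a ∈ Finset.range ((∑ l : Fin m, n l.castSucc) + 1), (-1 : ℝ) ^ a *
    ∑ j ∈ (Fintype.piFinset fun l : Fin m => Finset.range (n l.castSucc + 1)).filter
        (fun j => ∑ l, j l = a),
      ((a.factorial : ℝ) / ∏ l, ((j l).factorial : ℝ)) *
        (∏ l, b l.castSucc ^ j l) * b (Fin.last m) ^ (-(a : ℤ) - 1) *
        Chat m b y x (Fin.snoc (fun l : Fin m => n l.castSucc - j l) (n (Fin.last m) + a + 1))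

/-!
`Tsum m n b y x` is the integral over `[0, x]` of the product of all the factors
`B_{n_l}(b_l t + y_l) / n_l!`, and this integrand does not depend on the order of the factors.
To see the integral, single out the last factor, whose iterated primitives are again scaled
Bernoulli polynomials, and integrate it by parts repeatedly against the product of the others.
The derivatives of that product, expanded by the multinomial Leibniz rule, give the inner sums of
`Tsum`; they vanish beyond order `n₁ + ⋯ + n_{r-1}`.
-/

section Leibniz

open Polynomial
open scoped Nat

variable {ι R : Type*} [CommSemiring R] [DecidableEq ι]

lemma hasseDeriv_prod (s : Finset ι) (f : ι → R[X]) (k : ℕ) :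
    hasseDeriv k (∏ i ∈ s, f i) = ∑ j ∈ s.piAntidiag k, ∏ i ∈ s, hasseDeriv (j i) (f i) := by
  induction s using Finset.cons_induction generalizing k with
  | empty =>
    obtain rfl | hk := eq_or_ne k 0
    · simp
    · simp [hk, hasseDeriv_apply_one k hk.bot_lt]
  | cons i s hi ih =>
    simp only [prod_cons, hasseDeriv_mul, ih, mul_sum, piAntidiag_cons, sum_disjiUnion, sum_map]
    refine sum_congr rfl fun p _ ↦ sum_congr rfl fun j hj ↦ ?_
    have hji : j i = 0 := by
      by_contra h
      exact hi ((mem_piAntidiag.1 hj).2 i h)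
    congr 1
    · simp [hji]
    · refine prod_congr rfl fun l hl ↦ ?_
      simp [ne_of_mem_of_not_mem hl hi]

lemma iterate_derivative_prod (s : Finset ι) (f : ι → R[X]) (k : ℕ) :
    derivative^[k] (∏ i ∈ s, f i) =
      ∑ j ∈ s.piAntidiag k, Nat.multinomial s j • ∏ i ∈ s, derivative^[j i] (f i) := by
  rw [← factorial_smul_hasseDeriv, LinearMap.smul_apply, hasseDeriv_prod, smul_sum]
  refine sum_congr rfl fun j hj ↦ ?_
  have hprod : ∏ i ∈ s, derivative^[j i] (f i) =
      (∏ i ∈ s, (j i)!) • ∏ i ∈ s, hasseDeriv (j i) (f i) := by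
    simp only [← factorial_smul_hasseDeriv, LinearMap.smul_apply]
    simp [prod_mul_distrib]
  rw [hprod, ← mul_smul, mul_comm, Nat.multinomial_spec, (mem_piAntidiag.1 hj).1]

lemma cast_multinomial_eq_div {ι K : Type*} [Field K] [CharZero K] (s : Finset ι) (j : ι → ℕ) :
    (Nat.multinomial s j : K) = ((∑ i ∈ s, j i)! : K) / ∏ i ∈ s, ((j i)! : K) := by
  have hprod : ∏ i ∈ s, ((j i)! : K) ≠ 0 :=
    prod_ne_zero_iff.2 fun i _ ↦ Nat.cast_ne_zero.2 (j i).factorial_ne_zero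
  rw [eq_div_iff hprod, mul_comm]
  exact_mod_cast congrArg (Nat.cast (R := K)) (Nat.multinomial_spec s j)

end Leibniz

section ByParts

variable {R A : Type*} [CommSemiring R] [CommRing A] [Algebra R A]

/-- The boundary terms collected when `p * q 0` is integrated by parts `N` times with respect to
`D`, each time differentiating `p`. The element `q k` is meant to be a `k`-fold primitive of
`q 0`. -/
def byPartsSum (D : Derivation R A A) (p : A) (q : ℕ → A) (N : ℕ) : A :=
  ∑ k ∈ range N, (-1) ^ k * (D^[k] p * q (k + 1))

lemma derivation_byPartsSum (D : Derivation R A A) (p : A) {q : ℕ → A}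
    (hq : ∀ k, D (q (k + 1)) = q k) (N : ℕ) :
    D (byPartsSum D p q N) = p * q 0 - (-1) ^ N * (D^[N] p * q N) := by
  unfold byPartsSum
  induction N with
  | zero => simp
  | succ N ih =>
    have hsign : D ((-1) ^ N) = 0 := by simp [D.leibniz_pow]
    rw [sum_range_succ, map_add, ih, D.leibniz, D.leibniz, hsign, hq,
      Function.iterate_succ_apply']
    simp only [smul_eq_mul]
    ring

end ByParts

section ScaledBernoulli

open Polynomial
open scoped Nat

lemma natDegree_bernoulli_le (n : ℕ) : (Polynomial.bernoulli n).natDegree ≤ n :=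
  natDegree_le_iff_coeff_eq_zero.2 fun i hi ↦ by simp [coeff_bernoulli, hi.not_ge]

variable {R : Type*} [CommRing R] [Algebra ℚ R]

/-- The polynomial `B_n(b X + y) / n!`. With this normalization differentiation only lowers `n` and
multiplies by `b`. -/
noncomputable def scaledBernoulli (b y : R) (n : ℕ) : R[X] :=
  ((C (n ! : ℚ)⁻¹ * Polynomial.bernoulli n).map (algebraMap ℚ R)).comp (C b * X + C y)

namespace scaledBernoulli

lemma natDegree_le (b y : R) (n : ℕ) : (scaledBernoulli b y n).natDegree ≤ n := by
  calc (scaledBernoulli b y n).natDegree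
      ≤ ((C (n ! : ℚ)⁻¹ * Polynomial.bernoulli n).map (algebraMap ℚ R)).natDegree *
          (C b * X + C y).natDegree := natDegree_comp_le
    _ ≤ n * 1 := Nat.mul_le_mul
        (natDegree_map_le.trans ((natDegree_C_mul_le _ _).trans (natDegree_bernoulli_le n)))
        natDegree_linear_le
    _ = n := mul_one n

lemma derivative_succ (b y : R) (n : ℕ) :
    derivative (scaledBernoulli b y (n + 1)) = C b * scaledBernoulli b y n := by
  have hfactorial : ((n + 1)! : ℚ)⁻¹ * (n + 1) = (n ! : ℚ)⁻¹ := by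
    rw [Nat.factorial_succ]
    push_cast
    field_simp
  have hbernoulli : derivative (C ((n + 1)! : ℚ)⁻¹ * Polynomial.bernoulli (n + 1)) =
      C (n ! : ℚ)⁻¹ * Polynomial.bernoulli n := by
    rw [derivative_C_mul, derivative_bernoulli_add_one, ← hfactorial]
    simp [mul_assoc]
  have hlinear : derivative (C b * X + C y) = C b := by simp
  rw [scaledBernoulli, derivative_comp, derivative_map, hbernoulli, hlinear, scaledBernoulli]

lemma iterate_derivative_of_le (b y : R) {k n : ℕ} (h : k ≤ n) :
    derivative^[k] (scaledBernoulli b y n) = C (b ^ k) * scaledBernoulli b y (n - k) := by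
  induction k with
  | zero => simp
  | succ k ih =>
    rw [Function.iterate_succ_apply', ih (by omega), show n - k = n - (k + 1) + 1 by omega,
      derivative_C_mul, derivative_succ, ← mul_assoc, ← C_mul, pow_succ]

lemma iterate_derivative_prod_eq_sum {ι : Type*} [Fintype ι] [DecidableEq ι] (b y : ι → R)
    (n : ι → ℕ) (k : ℕ) :
    derivative^[k] (∏ i, scaledBernoulli (b i) (y i) (n i)) =
      ∑ j ∈ (Fintype.piFinset fun i ↦ range (n i + 1)).filter (fun j ↦ ∑ i, j i = k),
        C (Nat.multinomial univ j * ∏ i, b i ^ j i) *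
          ∏ i, scaledBernoulli (b i) (y i) (n i - j i) := by
  rw [iterate_derivative_prod]
  symm
  refine sum_subset_zero_on_sdiff (fun j hj ↦ ?_) (fun j hj ↦ ?_) (fun j hj ↦ ?_)
  · simp [(mem_filter.1 hj).2]
  · obtain ⟨i, hi⟩ : ∃ i, n i < j i := by
      by_contra! h
      simp_all
    rw [prod_eq_zero (mem_univ i), smul_zero]
    exact iterate_derivative_eq_zero ((natDegree_le _ _ _).trans_lt hi)
  · have hjn : ∀ i, j i ≤ n i := by simpa [Nat.lt_succ_iff] using (mem_filter.1 hj).1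
    simp only [iterate_derivative_of_le _ _ (hjn _), prod_mul_distrib, nsmul_eq_mul, C_mul,
      map_prod, map_natCast, mul_assoc]

lemma iterate_derivative_prod_eq_zero {ι : Type*} [Fintype ι] (b y : ι → R) (n : ι → ℕ) {k : ℕ}
    (h : ∑ i, n i < k) : derivative^[k] (∏ i, scaledBernoulli (b i) (y i) (n i)) = 0 :=
  iterate_derivative_eq_zero <| ((natDegree_prod_le _ _).trans
    (sum_le_sum fun i _ ↦ natDegree_le (b i) (y i) (n i))).trans_lt h

lemma eval_eq (b y x : ℝ) (n : ℕ) :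
    (scaledBernoulli b y n).eval x = BPoly n (b * x + y) / n ! := by
  simp [scaledBernoulli, BPoly, eval_comp, div_eq_inv_mul]

end scaledBernoulli

end ScaledBernoulli

section ProductIntegral

open Polynomial
open scoped Nat

lemma coe_derivative' {R : Type*} [CommSemiring R] :
    ⇑(derivative' : Derivation R R[X] R[X]) = derivative := rfl

lemma integral_eval_derivative (p : ℝ[X]) (a b : ℝ) :
    ∫ t in a..b, p.derivative.eval t = p.eval b - p.eval a :=
  intervalIntegral.integral_eq_sub_of_hasDerivAt (fun t _ ↦ p.hasDerivAt t)
    (p.derivative.continuous.intervalIntegrable a b)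

variable (m : ℕ) (n : Fin (m + 1) → ℕ) (b y : Fin (m + 1) → ℝ)

lemma Chat_eq_eval_sub_eval (x : ℝ) (k : Fin (m + 1) → ℕ) :
    Chat m b y x k =
      (∏ l, scaledBernoulli (b l) (y l) (k l)).eval x -
        (∏ l, scaledBernoulli (b l) (y l) (k l)).eval 0 := by
  simp only [Chat, eval_prod, scaledBernoulli.eval_eq, prod_div_distrib, mul_zero, zero_add]
  ring

/-- The primitive of the product of the `m + 1` scaled Bernoulli polynomials obtained by repeatedly
integrating the last factor by parts against the product of the others. The expansion stops once
all further derivatives of the latter product vanish. It is a primitive only if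
`b (Fin.last m) ≠ 0`, because of the junk value of the inverse. -/
noncomputable def productPrimitive : ℝ[X] :=
  byPartsSum derivative' (∏ l : Fin m, scaledBernoulli (b l.castSucc) (y l.castSucc) (n l.castSucc))
    (fun k ↦ C ((b (Fin.last m))⁻¹ ^ k) *
      scaledBernoulli (b (Fin.last m)) (y (Fin.last m)) (n (Fin.last m) + k))
    ((∑ l : Fin m, n l.castSucc) + 1)

lemma derivative_productPrimitive (hb : b (Fin.last m) ≠ 0) :
    derivative (productPrimitive m n b y) = ∏ l, scaledBernoulli (b l) (y l) (n l) := by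
  rw [← derivative'_apply, productPrimitive, derivation_byPartsSum]
  · simp [coe_derivative', Fin.prod_univ_castSucc, scaledBernoulli.iterate_derivative_prod_eq_zero]
  · intro k
    rw [derivative'_apply, derivative_C_mul, ← add_assoc, scaledBernoulli.derivative_succ,
      ← mul_assoc, ← C_mul, pow_succ, inv_mul_cancel_right₀ hb]

lemma Tsum_eq_eval_sub_eval (x : ℝ) :
    Tsum m n b y x = (productPrimitive m n b y).eval x - (productPrimitive m n b y).eval 0 := by
  have hzpow (a : ℕ) : b (Fin.last m) ^ (-(a : ℤ) - 1) = (b (Fin.last m))⁻¹ ^ (a + 1) := by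
    rw [← neg_add', zpow_neg, inv_pow]
    norm_cast
  simp only [productPrimitive, byPartsSum, Tsum, eval_finsetSum, ← sum_sub_distrib, coe_derivative',
    scaledBernoulli.iterate_derivative_prod_eq_sum, sum_mul, eval_mul, eval_pow, eval_neg, eval_one,
    ← mul_sub]
  refine sum_congr rfl fun a _ ↦ congrArg _ (sum_congr rfl fun j hj ↦ ?_)
  obtain ⟨-, rfl⟩ := mem_filter.1 hj
  rw [← cast_multinomial_eq_div, hzpow, Chat_eq_eval_sub_eval]
  simp only [Fin.prod_univ_castSucc, Fin.snoc_castSucc, Fin.snoc_last, eval_mul, eval_C, add_assoc]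
  ring

theorem Tsum_eq_integral (hb : b (Fin.last m) ≠ 0) (x : ℝ) :
    Tsum m n b y x = ∫ t in 0..x, ∏ l, BPoly (n l) (b l * t + y l) / (n l)! := by
  simp only [Tsum_eq_eval_sub_eval, ← integral_eval_derivative,
    derivative_productPrimitive m n b y hb, eval_prod, scaledBernoulli.eval_eq]

end ProductIntegral

/-- The right-hand side of the product-integral formula is invariant under permutations
of the data (Corollary 4.4). -/
theorem Tsum_perm_invariant (m : ℕ) (n : Fin (m + 1) → ℕ) (b y : Fin (m + 1) → ℝ)
    (hb : ∀ l, b l ≠ 0) (x : ℝ) (σ : Equiv.Perm (Fin (m + 1))) :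
    Tsum m n b y x = Tsum m (n ∘ σ) (b ∘ σ) (y ∘ σ) x := by
  rw [Tsum_eq_integral m n b y (hb _), Tsum_eq_integral m (n ∘ σ) (b ∘ σ) (y ∘ σ) (hb _)]
  refine intervalIntegral.integral_congr fun t _ ↦ ?_
  exact (Equiv.prod_comp σ fun l ↦ BPoly (n l) (b l * t + y l) / (n l).factorial).symm
end

section
/- Let n, m ≥ 0 be integers, let b₁, b₂ be nonzero real numbers, and let y₁, y₂ be real numbers. Then for every real x, Σ_{a=0}^{m+n+1} (−1)^a·C(m+n+1, a)·b₁^a·b₂^{m+n+1−a}·B_{m+n+1−a}(b₁x+y₁)·B_a(b₂x+y₂) = Σ_{a=0}^{m+n+1} (−1)^a·C(m+n+1, a)·b₁^a·b₂^{m+n+1−a}·B_{m+n+1−a}(y₁)·B_a(y₂); that is, the left-hand side is independent of x. -/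
open Finset

/-!
Call `p` an Appell sequence of parameter `c` when `pₙ' = n c pₙ₋₁`, that is, when its exponential
generating function satisfies `∂ₓ P(x, t) = c t P(x, t)`. Products of generating functions are
binomial convolutions, so by the Leibniz rule the parameters add under binomial convolution.
Since `Bₙ' = n Bₙ₋₁`, the sequences `(-b₁)ⁿ Bₙ(b₂ x + y₂)` and `b₂ⁿ Bₙ(b₁ x + y₁)` have the opposite
parameters `-b₁ b₂` and `b₁ b₂`; their convolution has parameter `0`, hence zero derivative.
-/

open Polynomial

section BinomialConvolution

variable {A : Type*} [CommSemiring A]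

/-- The binomial convolution of two sequences, i.e. the sequence whose exponential generating
function is the product of theirs. -/
def binomialConvolution (p q : ℕ → A) (n : ℕ) : A :=
  ∑ ij ∈ antidiagonal n, (n.choose ij.1 : A) * (p ij.1 * q ij.2)

theorem binomialConvolution_comm (p q : ℕ → A) :
    binomialConvolution p q = binomialConvolution q p := by
  funext n
  unfold binomialConvolution
  rw [← Nat.sum_antidiagonal_swap]
  refine sum_congr rfl fun ij hij => ?_
  rw [Prod.fst_swap, Prod.snd_swap, mul_comm (p _),
    Nat.choose_symm_of_eq_add ((mem_antidiagonal.mp hij).symm.trans (add_comm _ _))]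

theorem binomialConvolution_natCast_mul_pred_left (p q : ℕ → A) (n : ℕ) :
    binomialConvolution (fun k => k * p (k - 1)) q n = n * binomialConvolution p q (n - 1) := by
  cases n with
  | zero => simp [binomialConvolution]
  | succ n =>
    unfold binomialConvolution
    simp only [Nat.sum_antidiagonal_succ, Nat.cast_zero, zero_mul, mul_zero, zero_add, mul_sum,
      Nat.add_sub_cancel]
    refine sum_congr rfl fun ij _ => ?_
    have absorption : ((n + 1 : ℕ) : A) * n.choose ij.1 =
        (n + 1).choose (ij.1 + 1) * (ij.1 + 1 : ℕ) :=
      mod_cast congrArg (Nat.cast (R := A)) (Nat.add_one_mul_choose_eq n ij.1)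
    rw [← mul_assoc, ← mul_assoc, ← mul_assoc, ← absorption, mul_assoc _ (p _)]

theorem binomialConvolution_natCast_mul_pred_right (p q : ℕ → A) (n : ℕ) :
    binomialConvolution p (fun k => k * q (k - 1)) n = n * binomialConvolution p q (n - 1) := by
  rw [binomialConvolution_comm, binomialConvolution_natCast_mul_pred_left,
    binomialConvolution_comm]

end BinomialConvolution

section CommSemiring

variable {R : Type*} [CommSemiring R]

theorem derivative_binomialConvolution (p q : ℕ → R[X]) (n : ℕ) :
    derivative (binomialConvolution p q n) =
      binomialConvolution (fun k => derivative (p k)) q n +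
        binomialConvolution p (fun k => derivative (q k)) n := by
  simp only [binomialConvolution, derivative_sum, derivative_mul, derivative_natCast, zero_mul,
    zero_add, mul_add, sum_add_distrib]

/-- An Appell sequence of parameter `c`; the classical Appell sequences (without the requirement
`deg pₙ = n`) are those of parameter `1`. At `n = 0` the truncated index `n - 1` is harmless, as the
condition reads `p₀' = 0`. -/
def IsAppell (c : R) (p : ℕ → R[X]) : Prop :=
  ∀ n, derivative (p n) = C c * (n * p (n - 1))

namespace IsAppell

variable {c d : R} {p q : ℕ → R[X]}

theorem comp_C_mul_X_add_C (hp : IsAppell c p) (b y : R) :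
    IsAppell (b * c) fun n => (p n).comp (C b * X + C y) := by
  intro n
  simp only [derivative_comp, hp n, derivative_add, derivative_C_mul, derivative_X, derivative_C,
    mul_comp, C_comp, natCast_comp, C_mul]
  ring

theorem C_pow_mul (hp : IsAppell c p) (b : R) :
    IsAppell (b * c) fun n => C b ^ n * p n := by
  intro n
  cases n with
  | zero => simp [hp 0]
  | succ n =>
    have h_const : derivative (C b ^ (n + 1) * p (n + 1)) =
        C b ^ (n + 1) * derivative (p (n + 1)) := by
      rw [← C_pow, derivative_C_mul]
    simp only [h_const, hp (n + 1), Nat.add_sub_cancel, C_mul]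
    ring

protected theorem binomialConvolution (hp : IsAppell c p) (hq : IsAppell d q) :
    IsAppell (c + d) (binomialConvolution p q) := by
  intro n
  have h_left : binomialConvolution (fun k => derivative (p k)) q n =
      C c * binomialConvolution (fun k => k * p (k - 1)) q n := by
    simp only [binomialConvolution, hp _, mul_sum, mul_assoc, mul_left_comm (C c)]
  have h_right : binomialConvolution p (fun k => derivative (q k)) n =
      C d * binomialConvolution p (fun k => k * q (k - 1)) n := by
    simp only [binomialConvolution, hq _, mul_sum, mul_left_comm (C d)]
  rw [derivative_binomialConvolution, h_left, h_right, binomialConvolution_natCast_mul_pred_left,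
    binomialConvolution_natCast_mul_pred_right, C_add, add_mul]

theorem eval_eq_eval [IsAddTorsionFree R] (hp : IsAppell 0 p) (n : ℕ) (x y : R) :
    (p n).eval x = (p n).eval y := by
  have h_deriv : derivative (p n) = 0 := by rw [hp n, C_0, zero_mul]
  rw [eq_C_of_derivative_eq_zero h_deriv, eval_C, eval_C]

end IsAppell

theorem isAppell_bernoulli [Algebra ℚ R] :
    IsAppell (1 : R) fun n => (Polynomial.bernoulli n).map (algebraMap ℚ R) := by
  intro n
  rw [derivative_map, derivative_bernoulli, Polynomial.map_mul, Polynomial.map_natCast, C_1,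
    one_mul]

end CommSemiring

theorem bernoulli_convolution_independent_of_x_general {R : Type*} [CommRing R]
    [IsAddTorsionFree R] {c : R} {p q : ℕ → R[X]} (hp : IsAppell c p) (hq : IsAppell c q)
    (N : ℕ) (b₁ b₂ y₁ y₂ x : R) :
    ∑ a ∈ range (N + 1), (-1) ^ a * (N.choose a : R) * b₁ ^ a * b₂ ^ (N - a) *
        (p (N - a)).eval (b₁ * x + y₁) * (q a).eval (b₂ * x + y₂) =
      ∑ a ∈ range (N + 1), (-1) ^ a * (N.choose a : R) * b₁ ^ a * b₂ ^ (N - a) *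
        (p (N - a)).eval y₁ * (q a).eval y₂ := by
  let u : ℕ → R[X] := fun n => C (-b₁) ^ n * (q n).comp (C b₂ * X + C y₂)
  let v : ℕ → R[X] := fun n => C b₂ ^ n * (p n).comp (C b₁ * X + C y₁)
  have h_appell : IsAppell 0 (binomialConvolution u v) := by
    have h := ((hq.comp_C_mul_X_add_C b₂ y₂).C_pow_mul (-b₁)).binomialConvolution
      ((hp.comp_C_mul_X_add_C b₁ y₁).C_pow_mul b₂)
    rwa [show -b₁ * (b₂ * c) + b₂ * (b₁ * c) = 0 by ring] at h
  have h_eval (t : R) : (binomialConvolution u v N).eval t =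
      ∑ a ∈ range (N + 1), (-1) ^ a * (N.choose a : R) * b₁ ^ a * b₂ ^ (N - a) *
        (p (N - a)).eval (b₁ * t + y₁) * (q a).eval (b₂ * t + y₂) := by
    rw [binomialConvolution,
      Nat.sum_antidiagonal_eq_sum_range_succ (fun i j => (N.choose i : R[X]) * (u i * v j)),
      eval_finsetSum]
    refine sum_congr rfl fun a _ => ?_
    simp only [u, v, eval_mul, eval_natCast, eval_pow, eval_C, eval_comp, eval_add, eval_X,
      neg_pow b₁]
    ring
  simpa only [h_eval, mul_zero, zero_add] using h_appell.eval_eq_eval N x 0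

/-- The alternating binomial convolution of Bernoulli polynomials
`Σ (−1)^a C(m+n+1,a) b₁^a b₂^{m+n+1−a} B_{m+n+1−a}(b₁x+y₁) B_a(b₂x+y₂)` is independent of `x`. -/
theorem bernoulli_convolution_independent_of_x (n m : ℕ) (b₁ b₂ : ℝ)
    (hb₁ : b₁ ≠ 0) (hb₂ : b₂ ≠ 0) (y₁ y₂ : ℝ) (x : ℝ) :
    ∑ a ∈ Finset.range (m + n + 2), (-1 : ℝ) ^ a * (Nat.choose (m + n + 1) a : ℝ) *
        b₁ ^ a * b₂ ^ (m + n + 1 - a) * BPoly (m + n + 1 - a) (b₁ * x + y₁) *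
        BPoly a (b₂ * x + y₂) =
      ∑ a ∈ Finset.range (m + n + 2), (-1 : ℝ) ^ a * (Nat.choose (m + n + 1) a : ℝ) *
        b₁ ^ a * b₂ ^ (m + n + 1 - a) * BPoly (m + n + 1 - a) y₁ * BPoly a y₂ := by
  exact bernoulli_convolution_independent_of_x_general isAppell_bernoulli isAppell_bernoulli
    (m + n + 1) b₁ b₂ y₁ y₂ x
end
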